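/- arXiv:1402.6301 — 3 statements merged into one kernel-verified Lean document; each statement's English description precedes it below -/
import Mathlib

section
/- Let q be a prime power and let f(T) = T² + bT + c ∈ 𝔽_q[T] be a monic quadratic polynomial such that T = 0 is not a double root of T·f(T) (i.e., (b,c) ≠ (0,0)). Then the polynomial Y³ − x·f(x) is irreducible in 𝔽_q(x)[Y]; in particular, F = 𝔽_q(x)[Y]/(Y³ − x·f(x)) is a field and [F : 𝔽_q(x)] = 3. -/
open Polynomial

/-- The rational function `x·f(x) = x(x² + bx + c)` in `𝔽_q(x)`. -/
noncomputable def xfx (Fq : Type*) [Field Fq] (b c : Fq) : RatFunc Fq :=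
  RatFunc.X * (RatFunc.X ^ 2 + RatFunc.C b * RatFunc.X + RatFunc.C c)

/-- The Kummer polynomial `Y³ − x·f(x)` over the rational function field `𝔽_q(x)`. -/
noncomputable def kummerPoly (Fq : Type*) [Field Fq] (b c : Fq) : Polynomial (RatFunc Fq) :=
  X ^ 3 - C (xfx Fq b c)

/-!
Let `K` be the coefficient field and `g = x·f(x)`. Since `3` is prime, `Y³ − g` is irreducible
as soon as `g` is not a cube in `K(x)`. As `K[x]` is integrally closed, a cube root of `g` would
be a polynomial; it would be divisible by the prime `x`, because `g` is, so `x³` would divide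
`g`. This forces `b = c = 0`.
-/

theorem exists_pow_eq_algebraMap_iff {R A : Type*} [CommRing R] [CommRing A] [Algebra R A]
    [IsIntegrallyClosedIn R A] {n : ℕ} (hn : 0 < n) {a : R} :
    (∃ y : A, y ^ n = algebraMap R A a) ↔ ∃ r : R, r ^ n = a := by
  constructor
  · rintro ⟨y, hy⟩
    have y_pow_integral : IsIntegral R (y ^ n) := hy ▸ isIntegral_algebraMap
    obtain ⟨r, rfl⟩ :=
      IsIntegrallyClosedIn.exists_algebraMap_eq_of_isIntegral_pow hn y_pow_integral
    exact ⟨r, IsIntegralClosure.algebraMap_injective R R A (by rw [map_pow, hy])⟩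
  · rintro ⟨r, rfl⟩
    exact ⟨algebraMap R A r, (map_pow _ r n).symm⟩

theorem X_pow_sub_C_algebraMap_irreducible_iff_of_prime {R K : Type*} [CommRing R] [Field K]
    [Algebra R K] [IsIntegrallyClosedIn R K] {p : ℕ} (hp : p.Prime) {a : R} :
    Irreducible (X ^ p - C (algebraMap R K a)) ↔ ∀ r : R, r ^ p ≠ a := by
  rw [X_pow_sub_C_irreducible_iff_of_prime hp]
  simpa only [not_exists] using not_congr (exists_pow_eq_algebraMap_iff (A := K) hp.pos)

theorem pow_ne_of_prime_dvd_of_not_pow_dvd {M : Type*} [CommMonoidWithZero M] {π a : M} {n : ℕ}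
    (hπ : Prime π) (hdvd : π ∣ a) (hndvd : ¬π ^ n ∣ a) (r : M) : r ^ n ≠ a := by
  rintro rfl
  exact hndvd (pow_dvd_pow_of_dvd (hπ.dvd_of_dvd_pow hdvd) n)

theorem X_pow_three_dvd_X_mul_quadratic_iff {R : Type*} [CommSemiring R] {b c : R} :
    (X : R[X]) ^ 3 ∣ X * (X ^ 2 + C b * X + C c) ↔ b = 0 ∧ c = 0 := by
  set g : R[X] := X * (X ^ 2 + C b * X + C c) with hg
  have coeff_zero : g.coeff 0 = 0 := coeff_X_mul_zero _
  have coeff_one : g.coeff 1 = c := by simp [hg, coeff_X_mul (n := 0)]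
  have coeff_two : g.coeff 2 = b := by simp [hg, coeff_X_mul (n := 1), coeff_C, coeff_X_pow]
  rw [X_pow_dvd_iff]
  constructor
  · intro h
    exact ⟨coeff_two ▸ h 2 (by norm_num), coeff_one ▸ h 1 (by norm_num)⟩
  · rintro ⟨hb, hc⟩ d hd
    interval_cases d
    exacts [coeff_zero, coeff_one.trans hc, coeff_two.trans hb]

theorem isField_adjoinRoot_of_irreducible {K : Type*} [Field K] {g : K[X]}
    (hg : Irreducible g) : IsField (AdjoinRoot g) :=
  have : Fact (Irreducible g) := ⟨hg⟩
  Field.toIsField _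

section KummerPoly

variable (K : Type*) [Field K] (b c : K)

theorem xfx_eq_algebraMap :
    xfx K b c = algebraMap K[X] (RatFunc K) (X * (X ^ 2 + C b * X + C c)) := by
  simp only [xfx, map_mul, map_add, map_pow, RatFunc.algebraMap_X, RatFunc.algebraMap_C]

theorem irreducible_kummerPoly (hbc : ¬(b = 0 ∧ c = 0)) : Irreducible (kummerPoly K b c) := by
  rw [kummerPoly, xfx_eq_algebraMap,
    X_pow_sub_C_algebraMap_irreducible_iff_of_prime Nat.prime_three]
  exact pow_ne_of_prime_dvd_of_not_pow_dvd prime_X (dvd_mul_right X _)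
    (mt X_pow_three_dvd_X_mul_quadratic_iff.mp hbc)

theorem finrank_adjoinRoot_kummerPoly :
    Module.finrank (RatFunc K) (AdjoinRoot (kummerPoly K b c)) = 3 :=
  finrank_quotient_span_eq_natDegree.trans natDegree_X_pow_sub_C

end KummerPoly

theorem stmt_0_general (K : Type*) [Field K] (b c : K) (hbc : ¬(b = 0 ∧ c = 0)) :
    Irreducible (kummerPoly K b c) ∧
      IsField (AdjoinRoot (kummerPoly K b c)) ∧
      Module.finrank (RatFunc K) (AdjoinRoot (kummerPoly K b c)) = 3 :=
  have hirr := irreducible_kummerPoly K b c hbc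
  ⟨hirr, isField_adjoinRoot_of_irreducible hirr, finrank_adjoinRoot_kummerPoly K b c⟩

/-- For a finite field `𝔽_q` and a monic quadratic `f(T) = T² + bT + c`
such that `T = 0` is not a double root of `T·f(T)` (i.e. `(b,c) ≠ (0,0)`), the polynomial
`Y³ − x·f(x)` is irreducible over `𝔽_q(x)`; in particular
`F = 𝔽_q(x)[Y]/(Y³ − x·f(x))` is a field and `[F : 𝔽_q(x)] = 3`. -/
theorem stmt_0 (Fq : Type*) [Field Fq] [Fintype Fq] (b c : Fq)
    (hbc : ¬(b = 0 ∧ c = 0)) :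
    Irreducible (kummerPoly Fq b c) ∧
      IsField (AdjoinRoot (kummerPoly Fq b c)) ∧
      Module.finrank (RatFunc Fq) (AdjoinRoot (kummerPoly Fq b c)) = 3 :=
  stmt_0_general Fq b c hbc
end

section
/- Let q = p^r be a prime power with q ≡ 1 (mod 3), f(T) = T² + bT + c ∈ 𝔽_q[T] a monic quadratic polynomial irreducible over 𝔽_q, and F = 𝔽_q(x)[Y]/(Y³ − x·f(x)). Let A be the integral closure of the polynomial ring 𝔽_q[x] in F, let Q₁ be the unique maximal ideal of A lying over (x) and Q₂ the unique maximal ideal of A lying over (f(x)). Then the different ideal of A over 𝔽_q[x] equals Q₁²·Q₂²; that is, the (finite part of the) different divisor of F/𝔽_q(x) is 2Q₁ + 2Q₂. -/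
set_option synthInstance.maxHeartbeats 400000

open Polynomial

/-!
By Eisenstein, a root `y` of `Yⁿ - p₁⋯pₘ`, where the `pᵢ` are pairwise non-associated primes of an
integrally closed domain `R` in which `n` is invertible, has minimal polynomial `Yⁿ - p₁⋯pₘ`. Its
derivative at `y` is `yⁿ⁻¹` up to a unit, so the conductor of `R[y]` times the different is
`(y)ⁿ⁻¹`. In particular `p₁⋯pₘ = yⁿ` lies in the conductor, and since the minimal polynomial is
Eisenstein at every `pᵢ`, these factors can be cancelled one by one: `R[y]` is the full integral
closure. Hence the different is `(y)ⁿ⁻¹`. Finally `(y)` is the product of the primes above the `pᵢ`,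
because modulo `y` every integral element is congruent to an element of `R`.
-/

section PrimeProducts

variable {M ι : Type*} [CommMonoidWithZero M] [IsCancelMulZero M] {p : ι → M}

theorem prod_dvd_of_forall_prime_dvd (hp : ∀ i, Prime (p i))
    (hassoc : Pairwise fun i j => ¬ Associated (p i) (p j)) (s : Finset ι) {r : M}
    (hr : ∀ i ∈ s, p i ∣ r) : ∏ i ∈ s, p i ∣ r := by
  classical
  induction s using Finset.induction_on generalizing r with
  | empty => simp
  | insert i s hi ih =>
    rw [Finset.prod_insert hi]
    obtain ⟨t, rfl⟩ := hr i (Finset.mem_insert_self i s)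
    refine mul_dvd_mul_left _ (ih fun j hj => ?_)
    have hji : ¬ p j ∣ p i := fun h =>
      hassoc (ne_of_mem_of_not_mem hj hi) ((hp j).associated_of_dvd (hp i) h)
    exact ((hp j).dvd_or_dvd (hr j (Finset.mem_insert_of_mem hj))).resolve_left hji

theorem sq_not_dvd_prod_of_prime [Fintype ι] (hp : ∀ i, Prime (p i))
    (hassoc : Pairwise fun i j => ¬ Associated (p i) (p j)) (i : ι) : ¬ p i ^ 2 ∣ ∏ j, p j := by
  classical
  rw [← Finset.mul_prod_erase _ _ (Finset.mem_univ i), sq, mul_dvd_mul_iff_left (hp i).ne_zero]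
  intro h
  obtain ⟨j, hj, hij⟩ := (hp i).exists_mem_finset_dvd h
  exact hassoc (Finset.ne_of_mem_erase hj).symm ((hp i).associated_of_dvd (hp j) hij)

end PrimeProducts

section Eisenstein

variable {R : Type*} [CommRing R] {n : ℕ}

theorem isEisensteinAt_X_pow_sub_C {P : Ideal R} {a : R} (hP : P ≠ ⊤) (ha : a ∈ P)
    (ha2 : a ∉ P ^ 2) (hn : n ≠ 0) : (X ^ n - C a : R[X]).IsEisensteinAt P := by
  have : Nontrivial R := (Submodule.nontrivial_iff R).1 ⟨P, ⊤, hP⟩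
  refine (monic_X_pow_sub_C a hn).isEisensteinAt_of_mem_of_notMem hP (fun {k} hk => ?_) ?_
  · rw [natDegree_X_pow_sub_C] at hk
    rw [coeff_sub, coeff_X_pow, if_neg hk.ne, zero_sub, coeff_C]
    split_ifs
    · exact P.neg_mem ha
    · simp
  · simpa [hn.symm] using ha2

variable [IsDomain R] {ι : Type*} [Fintype ι] {p : ι → R}

theorem isEisensteinAt_X_pow_sub_C_prod (hp : ∀ i, Prime (p i))
    (hassoc : Pairwise fun i j => ¬ Associated (p i) (p j)) (hn : n ≠ 0) (i : ι) :
    (X ^ n - C (∏ j, p j) : R[X]).IsEisensteinAt (Ideal.span {p i}) := by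
  refine isEisensteinAt_X_pow_sub_C ?_ ?_ ?_ hn
  · exact ((Ideal.span_singleton_prime (hp i).ne_zero).2 (hp i)).ne_top
  · exact Ideal.mem_span_singleton.2 (Finset.dvd_prod_of_mem p (Finset.mem_univ i))
  · rw [Ideal.span_singleton_pow, Ideal.mem_span_singleton]
    exact sq_not_dvd_prod_of_prime hp hassoc i

theorem irreducible_X_pow_sub_C_prod [Nonempty ι] (hp : ∀ i, Prime (p i))
    (hassoc : Pairwise fun i j => ¬ Associated (p i) (p j)) (hn : n ≠ 0) :
    Irreducible (X ^ n - C (∏ i, p i) : R[X]) := by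
  obtain ⟨i⟩ := ‹Nonempty ι›
  exact (isEisensteinAt_X_pow_sub_C_prod hp hassoc hn i).irreducible
    ((Ideal.span_singleton_prime (hp i).ne_zero).2 (hp i)) (monic_X_pow_sub_C _ hn).isPrimitive
    (by rw [natDegree_X_pow_sub_C]; exact hn.pos)

theorem minpoly_eq_X_pow_sub_C_of_irreducible [IsIntegrallyClosed R] {B : Type*} [CommRing B]
    [IsDomain B] [Algebra R B] [Module.IsTorsionFree R B] (hn : n ≠ 0) {a : R}
    (hirr : Irreducible (X ^ n - C a : R[X])) {y : B} (hy : y ^ n = algebraMap R B a) :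
    minpoly R y = X ^ n - C a := by
  have hroot : aeval y (X ^ n - C a) = 0 := by simp [hy]
  have hmonic : (X ^ n - C a : R[X]).Monic := monic_X_pow_sub_C a hn
  have hint : IsIntegral R y := ⟨X ^ n - C a, hmonic, hroot⟩
  have hdvd : minpoly R y ∣ X ^ n - C a := minpoly.isIntegrallyClosed_dvd hint hroot
  exact eq_of_monic_of_associated (minpoly.monic hint) hmonic
    ((hirr.dvd_iff.1 hdvd).resolve_left (minpoly.not_isUnit R y)).symm

end Eisenstein

section Separable

variable {K L : Type*} [Field K] [Field L] [Algebra K L]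

theorem isSeparable_of_adjoin_singleton_eq_top {y : L} (hy : IsSeparable K y)
    (hgen : Algebra.adjoin K {y} = ⊤) : Algebra.IsSeparable K L := by
  have hfield : IntermediateField.adjoin K {y} = ⊤ := by
    rw [← IntermediateField.toSubalgebra_inj, IntermediateField.top_toSubalgebra,
      eq_top_iff, ← hgen]
    exact IntermediateField.algebra_adjoin_le_adjoin K {y}
  have : Algebra.IsSeparable K (⊤ : IntermediateField K L) :=
    hfield ▸ (IntermediateField.isSeparable_adjoin_simple_iff_isSeparable K L).2 hy
  exact .of_algHom K (⊤ : IntermediateField K L) IntermediateField.topEquiv.symm.toAlgHom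

theorem isSeparable_of_pow_eq_algebraMap {n : ℕ} (hn : (n : K) ≠ 0) {a : K} (ha : a ≠ 0) {y : L}
    (hy : y ^ n = algebraMap K L a) : IsSeparable K y :=
  (separable_X_pow_sub_C a hn ha).of_dvd (minpoly.dvd K y (by simp [hy]))

end Separable

section Factorization

variable {R B : Type*} [CommRing R] [CommRing B] [Algebra R B] {y : B}

theorem exists_eq_algebraMap_add_mul_of_adjoin_eq_top (hadj : Algebra.adjoin R {y} = ⊤) (z : B) :
    ∃ (r : R) (w : B), z = algebraMap R B r + y * w := by
  have hz : z ∈ Algebra.adjoin R {y} := hadj ▸ Algebra.mem_top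
  rw [Algebra.adjoin_singleton_eq_range_aeval] at hz
  obtain ⟨g, hg⟩ := hz
  refine ⟨g.coeff 0, aeval y g.divX, ?_⟩
  calc z = aeval y (X * g.divX + C (g.coeff 0)) := by rw [X_mul_divX_add]; exact hg.symm
    _ = algebraMap R B (g.coeff 0) + y * aeval y g.divX := by
      rw [map_add, map_mul, aeval_X, aeval_C, add_comm]

theorem span_singleton_eq_prod_of_pow_eq_prod [IsDomain R] [IsDedekindDomain B]
    [Module.IsTorsionFree R B] {ι : Type*} [Fintype ι] {p : ι → R} {Q : ι → Ideal B} {n : ℕ}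
    (hadj : Algebra.adjoin R {y} = ⊤) (hp : ∀ i, Prime (p i))
    (hassoc : Pairwise fun i j => ¬ Associated (p i) (p j)) (hn : n ≠ 0)
    (hy : y ^ n = algebraMap R B (∏ i, p i)) (hQ : ∀ i, (Q i).IsPrime)
    (hQp : ∀ i, (Q i).under R = Ideal.span {p i}) : Ideal.span {y} = ∏ i, Q i := by
  have mem_iff (i : ι) (r : R) : algebraMap R B r ∈ Q i ↔ p i ∣ r := by
    rw [← Ideal.mem_comap, ← Ideal.mem_span_singleton, ← hQp i]
  have hyQ (i : ι) : y ∈ Q i := (hQ i).mem_of_pow_mem n <| by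
    rw [hy, mem_iff]
    exact Finset.dvd_prod_of_mem p (Finset.mem_univ i)
  apply le_antisymm
  · have hQ_ne_bot (i : ι) : Q i ≠ ⊥ := Submodule.ne_bot_iff _ |>.2
      ⟨_, (mem_iff i (p i)).2 dvd_rfl, by simpa using (hp i).ne_zero⟩
    have hQ_assoc : Pairwise fun i j => ¬ Associated (Q i) (Q j) := fun i j hij h =>
      hassoc hij <| Ideal.span_singleton_eq_span_singleton.1 <| by
        rw [← hQp, ← hQp, associated_iff_eq.1 h]
    rw [← Ideal.dvd_iff_le]
    refine prod_dvd_of_forall_prime_dvd (fun i => Ideal.prime_of_isPrime (hQ_ne_bot i) (hQ i))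
      hQ_assoc Finset.univ fun i _ => ?_
    rw [Ideal.dvd_span_singleton]
    exact hyQ i
  · intro z hz
    have hzQ (i : ι) : z ∈ Q i := Ideal.le_of_dvd (Finset.dvd_prod_of_mem Q (Finset.mem_univ i)) hz
    obtain ⟨r, w, rfl⟩ := exists_eq_algebraMap_add_mul_of_adjoin_eq_top hadj z
    have hr (i : ι) : p i ∣ r := (mem_iff i r).1 <|
      ((Q i).add_mem_iff_left ((Q i).mul_mem_right w (hyQ i))).1 (hzQ i)
    have hyr : y ∣ algebraMap R B r := (dvd_pow_self y hn).trans <| hy ▸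
      map_dvd _ (prod_dvd_of_forall_prime_dvd hp hassoc Finset.univ fun i _ => hr i)
    exact Ideal.mem_span_singleton.2 (dvd_add hyr (dvd_mul_right y w))

end Factorization

section IntegralClosure

variable (R K L : Type*) {B : Type*} [CommRing R] [IsDomain R] [IsIntegrallyClosed R]
  [Field K] [Field L] [CommRing B] [Algebra R K] [IsFractionRing R K] [Algebra K L] [Algebra R L]
  [IsScalarTower R K L] [Algebra R B] [Algebra B L] [IsScalarTower R B L] [IsIntegralClosure B R L]

include K L

theorem mem_adjoin_of_prime_smul_mem_adjoin {y : B}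
    (hgen : Algebra.adjoin K {algebraMap B L y} = ⊤) {p : R} (hp : Prime p)
    (heis : (minpoly R y).IsEisensteinAt (Ideal.span {p})) {z : B}
    (hz : p • z ∈ Algebra.adjoin R {y}) : z ∈ Algebra.adjoin R {y} := by
  let φ : B →ₐ[R] L := IsScalarTower.toAlgHom R B L
  have hφ : Function.Injective φ := IsIntegralClosure.algebraMap_injective B R L
  have hint (w : B) : IsIntegral R (φ w) := (IsIntegralClosure.isIntegral R L w).map φ
  have mem_iff (w : B) : φ w ∈ Algebra.adjoin R {φ y} ↔ w ∈ Algebra.adjoin R {y} := by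
    rw [← φ.map_adjoin_singleton]
    exact hφ.mem_set_image
  let pb : PowerBasis K L := .ofAdjoinEqTop' (hint y).tower_top hgen
  have hpb : pb.gen = φ y := PowerBasis.ofAdjoinEqTop'_gen _ _
  rw [← mem_iff, ← hpb]
  refine mem_adjoin_of_smul_prime_smul_of_minpoly_isEisensteinAt hp (hpb ▸ hint y) (hint z) ?_ ?_
  · rwa [hpb, ← map_smul, mem_iff]
  · rwa [hpb, minpoly.algHom_eq φ hφ]

variable [IsDedekindDomain B] [Module.IsTorsionFree R B] {n : ℕ} {y : B}

theorem conductor_mul_differentIdeal_of_minpoly_eq (hn : IsUnit (n : R))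
    (hgen : Algebra.adjoin K {algebraMap B L y} = ⊤) {a : R} (ha : a ≠ 0)
    (hmin : minpoly R y = X ^ n - C a) :
    conductor R y * differentIdeal R B = Ideal.span {y} ^ (n - 1) := by
  have hy : y ^ n = algebraMap R B a := by
    simpa [hmin, sub_eq_zero] using minpoly.aeval R y
  have hyL : algebraMap B L y ^ n = algebraMap K L (algebraMap R K a) := by
    rw [← map_pow, hy, ← IsScalarTower.algebraMap_apply, ← IsScalarTower.algebraMap_apply]
  have hnK : (n : K) ≠ 0 := by simpa using (hn.map (algebraMap R K)).ne_zero
  have hsep : IsSeparable K (algebraMap B L y) :=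
    isSeparable_of_pow_eq_algebraMap hnK (by simpa using ha) hyL
  have : Algebra.IsSeparable K L := isSeparable_of_adjoin_singleton_eq_top hsep hgen
  have : FiniteDimensional K L := (PowerBasis.ofAdjoinEqTop' hsep.isIntegral hgen).finite
  have hderiv : aeval y (derivative (minpoly R y)) = n * y ^ (n - 1) := by
    simp [hmin, derivative_X_pow]
  have hnB : IsUnit (n : B) := by simpa using hn.map (algebraMap R B)
  rw [conductor_mul_differentIdeal R K L y hgen, hderiv, Ideal.span_singleton_mul_left_unit hnB,
    Ideal.span_singleton_pow]

variable {ι : Type*} [Fintype ι] [Nonempty ι] {p : ι → R} (hn : IsUnit (n : R))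
  (hgen : Algebra.adjoin K {algebraMap B L y} = ⊤) (hp : ∀ i, Prime (p i))
  (hassoc : Pairwise fun i j => ¬ Associated (p i) (p j))
  (hy : y ^ n = algebraMap R B (∏ i, p i))

include hn hgen hp hassoc hy

theorem adjoin_singleton_eq_top_of_pow_eq_prod : Algebra.adjoin R {y} = ⊤ := by
  classical
  have hn0 : n ≠ 0 := by rintro rfl; simp at hn
  have hmin : minpoly R y = X ^ n - C (∏ i, p i) :=
    minpoly_eq_X_pow_sub_C_of_irreducible hn0 (irreducible_X_pow_sub_C_prod hp hassoc hn0) hy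
  have hprod : ∏ i, p i ≠ 0 := Finset.prod_ne_zero_iff.2 fun i _ => (hp i).ne_zero
  have hpow_le : Ideal.span {y} ^ (n - 1) ≤ conductor R y :=
    conductor_mul_differentIdeal_of_minpoly_eq R K L hn hgen hprod hmin ▸ Ideal.mul_le_left
  have hconductor : algebraMap R B (∏ i, p i) ∈ conductor R y := by
    rw [← hy]
    exact hpow_le (Ideal.pow_le_pow_right (n.sub_le 1)
      (Ideal.pow_mem_pow (Ideal.mem_span_singleton_self y) n))
  have hcancel (s : Finset ι) {z : B} (hz : (∏ i ∈ s, p i) • z ∈ Algebra.adjoin R {y}) :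
      z ∈ Algebra.adjoin R {y} := by
    induction s using Finset.induction_on with
    | empty => simpa using hz
    | insert i s hi ih =>
      rw [Finset.prod_insert hi, mul_smul] at hz
      exact ih (mem_adjoin_of_prime_smul_mem_adjoin R K L hgen (hp i)
        (hmin ▸ isEisensteinAt_X_pow_sub_C_prod hp hassoc hn0 i) hz)
  refine eq_top_iff.2 fun z _ => hcancel Finset.univ ?_
  rw [Algebra.smul_def]
  exact mem_conductor_iff.1 hconductor z

theorem differentIdeal_eq_span_pow_of_pow_eq_prod :
    differentIdeal R B = Ideal.span {y} ^ (n - 1) := by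
  have hn0 : n ≠ 0 := by rintro rfl; simp at hn
  have hprod : ∏ i, p i ≠ 0 := Finset.prod_ne_zero_iff.2 fun i _ => (hp i).ne_zero
  rw [← conductor_mul_differentIdeal_of_minpoly_eq R K L hn hgen hprod
      (minpoly_eq_X_pow_sub_C_of_irreducible hn0 (irreducible_X_pow_sub_C_prod hp hassoc hn0) hy),
    conductor_eq_top_of_adjoin_eq_top
      (adjoin_singleton_eq_top_of_pow_eq_prod R K L hn hgen hp hassoc hy), Ideal.top_mul]

theorem differentIdeal_eq_prod_pow_of_pow_eq_prod {Q : ι → Ideal B} (hQ : ∀ i, (Q i).IsPrime)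
    (hQp : ∀ i, (Q i).under R = Ideal.span {p i}) :
    differentIdeal R B = ∏ i, Q i ^ (n - 1) := by
  have hn0 : n ≠ 0 := by rintro rfl; simp at hn
  have hadj : Algebra.adjoin R {y} = ⊤ :=
    adjoin_singleton_eq_top_of_pow_eq_prod R K L hn hgen hp hassoc hy
  rw [differentIdeal_eq_span_pow_of_pow_eq_prod R K L hn hgen hp hassoc hy,
    span_singleton_eq_prod_of_pow_eq_prod hadj hp hassoc hn0 hy hQ hQp, Finset.prod_pow]

end IntegralClosure

theorem differentIdeal_integralClosure_adjoinRoot (R K : Type*) [CommRing R] [IsDomain R]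
    [IsIntegrallyClosed R] [Field K] [Algebra R K] [IsFractionRing R K]
    {ι : Type*} [Fintype ι] [Nonempty ι] {p : ι → R} {n : ℕ} {g : K[X]}
    (hg : g = X ^ n - C (algebraMap R K (∏ i, p i)))
    [IsDedekindDomain (integralClosure R (AdjoinRoot g))]
    [Module.IsTorsionFree R (integralClosure R (AdjoinRoot g))]
    (hn : IsUnit (n : R)) (hp : ∀ i, Prime (p i))
    (hassoc : Pairwise fun i j => ¬ Associated (p i) (p j))
    {Q : ι → Ideal (integralClosure R (AdjoinRoot g))} (hQ : ∀ i, (Q i).IsPrime)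
    (hQp : ∀ i, (Q i).under R = Ideal.span {p i}) :
    differentIdeal R (integralClosure R (AdjoinRoot g)) = ∏ i, Q i ^ (n - 1) := by
  have hn0 : n ≠ 0 := by rintro rfl; simp at hn
  have hirr : Irreducible g := by
    have hmap := ((monic_X_pow_sub_C (∏ i, p i) hn0).irreducible_iff_irreducible_map_fraction_map
      (K := K)).1 (irreducible_X_pow_sub_C_prod hp hassoc hn0)
    rw [hg]
    simpa only [Polynomial.map_sub, Polynomial.map_pow, map_X, map_C] using hmap
  have : Fact (Irreducible g) := ⟨hirr⟩
  have hroot : AdjoinRoot.root g ^ n = algebraMap R (AdjoinRoot g) (∏ i, p i) := by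
    have haeval : aeval (AdjoinRoot.root g) g = 0 := by rw [AdjoinRoot.aeval_eq, AdjoinRoot.mk_self]
    rw [congrArg (aeval (AdjoinRoot.root g)) hg, map_sub, map_pow, aeval_X, aeval_C,
      ← IsScalarTower.algebraMap_apply, sub_eq_zero] at haeval
    exact haeval
  have hint : IsIntegral R (AdjoinRoot.root g) :=
    .of_pow hn0.pos (hroot ▸ isIntegral_algebraMap)
  let y : integralClosure R (AdjoinRoot g) := ⟨AdjoinRoot.root g, hint⟩
  exact differentIdeal_eq_prod_pow_of_pow_eq_prod R K (AdjoinRoot g) (y := y) hn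
    AdjoinRoot.adjoinRoot_eq_top hp hassoc (Subtype.ext hroot) hQ hQp

theorem natCast_ne_zero_of_card_coprime {R : Type*} [CommRing R] [Nontrivial R] [Fintype R] {n : ℕ}
    (h : (Fintype.card R).Coprime n) : (n : R) ≠ 0 := by
  intro hn
  have := (Nat.isCoprime_iff_coprime.2 h).map (Int.castRingHom R)
  exact not_isCoprime_zero_zero (by simpa [hn] using this)

theorem not_associated_X_of_natDegree_ne_one {R : Type*} [CommRing R] [IsDomain R] {f : R[X]}
    (hf : f.natDegree ≠ 1) : ¬ Associated X f := fun h =>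
  hf <| by rw [← natDegree_eq_of_degree_eq (degree_eq_degree_of_associated h), natDegree_X]

theorem stmt_6_general (k : Type*) [Field k] (h3 : (3 : k) ≠ 0)
    (b c : k) (hf : Irreducible (X ^ 2 + C b * X + C c : k[X]))
    [IsDedekindDomain (integralClosure k[X] (AdjoinRoot (kummerPoly k b c)))]
    [Module.IsTorsionFree k[X] (integralClosure k[X] (AdjoinRoot (kummerPoly k b c)))]
    (Q₁ Q₂ : Ideal (integralClosure k[X] (AdjoinRoot (kummerPoly k b c))))
    (hQ₁prime : Q₁.IsPrime) (hQ₁ : Q₁.under k[X] = Ideal.span {X})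
    (hQ₂prime : Q₂.IsPrime) (hQ₂ : Q₂.under k[X] = Ideal.span {X ^ 2 + C b * X + C c}) :
    differentIdeal k[X] (integralClosure k[X] (AdjoinRoot (kummerPoly k b c))) =
      Q₁ ^ 2 * Q₂ ^ 2 := by
  let p : Fin 2 → k[X] := ![X, X ^ 2 + C b * X + C c]
  have hkummer : kummerPoly k b c = X ^ 3 - C (algebraMap k[X] (RatFunc k) (∏ i, p i)) := by
    simp [p, kummerPoly, xfx]
  have h3unit : IsUnit ((3 : ℕ) : k[X]) := by
    simpa only [map_ofNat, Nat.cast_ofNat] using isUnit_C.2 h3.isUnit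
  have hp : ∀ i, Prime (p i) := Fin.forall_fin_two.2 ⟨prime_X, hf.prime⟩
  have hdeg : (X ^ 2 + C b * X + C c).natDegree = 2 := by compute_degree!
  have hXf : ¬ Associated X (X ^ 2 + C b * X + C c) :=
    not_associated_X_of_natDegree_ne_one (by simp [hdeg])
  have hassoc : Pairwise fun i j => ¬ Associated (p i) (p j) := by
    simp [Pairwise, Fin.forall_fin_two, p, hXf, mt Associated.symm hXf]
  simpa using differentIdeal_integralClosure_adjoinRoot k[X] (RatFunc k) hkummer h3unit hp hassoc
    (Q := ![Q₁, Q₂]) (Fin.forall_fin_two.2 ⟨hQ₁prime, hQ₂prime⟩) (Fin.forall_fin_two.2 ⟨hQ₁, hQ₂⟩)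

/-- Let `𝔽_q` be a finite field with `q ≡ 1 (mod 3)`,
`f(T) = T² + bT + c` monic quadratic irreducible over `𝔽_q`, and
`F = 𝔽_q(x)[Y]/(Y³ − x·f(x))`.  Let `A` be the integral closure of `𝔽_q[x]` in `F`
(a Dedekind domain), `Q₁` the unique maximal ideal of `A` over `(x)` and `Q₂` the unique
maximal ideal of `A` over `(f(x))`.  Then the different ideal of `A/𝔽_q[x]` equals
`Q₁²·Q₂²`; i.e. the different divisor of `F/𝔽_q(x)` is `2Q₁ + 2Q₂`. -/
theorem stmt_6 (Fq : Type*) [Field Fq] [Fintype Fq] (hq : Fintype.card Fq % 3 = 1)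
    (b c : Fq) (hf : Irreducible (X ^ 2 + C b * X + C c : Polynomial Fq))
    [IsDedekindDomain (integralClosure (Polynomial Fq) (AdjoinRoot (kummerPoly Fq b c)))]
    [NoZeroSMulDivisors (Polynomial Fq)
      (integralClosure (Polynomial Fq) (AdjoinRoot (kummerPoly Fq b c)))]
    (Q₁ Q₂ : Ideal (integralClosure (Polynomial Fq) (AdjoinRoot (kummerPoly Fq b c))))
    (hQ₁max : Q₁.IsMaximal)
    (hQ₁ : Q₁.comap (algebraMap (Polynomial Fq)
        (integralClosure (Polynomial Fq) (AdjoinRoot (kummerPoly Fq b c)))) =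
      Ideal.span {(X : Polynomial Fq)})
    (hQ₂max : Q₂.IsMaximal)
    (hQ₂ : Q₂.comap (algebraMap (Polynomial Fq)
        (integralClosure (Polynomial Fq) (AdjoinRoot (kummerPoly Fq b c)))) =
      Ideal.span {(X ^ 2 + C b * X + C c : Polynomial Fq)}) :
    differentIdeal (Polynomial Fq)
        (integralClosure (Polynomial Fq) (AdjoinRoot (kummerPoly Fq b c))) =
      Q₁ ^ 2 * Q₂ ^ 2 := by
  have h3 : ((3 : ℕ) : Fq) ≠ 0 := natCast_ne_zero_of_card_coprime <|
    (Nat.prime_three.coprime_iff_not_dvd.2 (by omega)).symm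
  exact stmt_6_general Fq h3 b c hf Q₁ Q₂ hQ₁max.isPrime hQ₁ hQ₂max.isPrime hQ₂
end

section
/- Let K be a field, let b, c ∈ K with c ≠ 0, let L be a field extension of K, and let x, y ∈ L be nonzero elements with y³ = x³ + bx² + cx. Let v be a valuation on L with values in a linearly ordered commutative group with zero, such that v(a) = 1 for every a ∈ Kˣ. If v(x) < 1 (i.e., x has a zero at the place determined by v), then v(y)³ = v(x); in particular, v(y) < 1 and the multiplicity of x at such a place is three times that of y. -/
/-!
Write `y ^ 3 = x * f(x)` with `f(T) = T ^ 2 + b * T + c`. Where `x` vanishes, `f(x)` reduces to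
the nonzero constant `c`, so `f(x)` is a unit there and `y ^ 3` has the same valuation as `x`.
-/

open Polynomial

section

variable {A B Γ : Type*} [CommSemiring A] [Ring B] [Algebra A B]
  [LinearOrderedCommMonoidWithZero Γ] {v : Valuation B Γ} {p : A[X]} {x y : B}

theorem valuation_aeval_le_one (hp : ∀ i, v (algebraMap A B (p.coeff i)) ≤ 1) (hx : v x ≤ 1) :
    v (aeval x p) ≤ 1 := by
  rw [aeval_eq_sum_range]
  refine v.map_sum_le fun i _ ↦ ?_
  rw [Algebra.smul_def, map_mul, map_pow]
  exact mul_le_one' (hp i) (pow_le_one' hx i)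

theorem valuation_aeval_eq_one_of_coeff_zero
    (hp : ∀ i, v (algebraMap A B (p.coeff i)) ≤ 1)
    (hp₀ : v (algebraMap A B (p.coeff 0)) = 1) (hx : v x < 1) :
    v (aeval x p) = 1 := by
  have h_divX : v (aeval x p.divX) ≤ 1 :=
    valuation_aeval_le_one (fun i ↦ by rw [coeff_divX]; exact hp (i + 1)) hx.le
  have h_lt : v (aeval x p.divX * x) < v (algebraMap A B (p.coeff 0)) := by
    rw [map_mul, hp₀]
    exact (mul_le_of_le_one_left' h_divX).trans_lt hx
  calc v (aeval x p)
      = v (aeval x p.divX * x + algebraMap A B (p.coeff 0)) := by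
        conv_lhs => rw [← p.divX_mul_X_add, map_add, map_mul, aeval_X, aeval_C]
    _ = 1 := by rw [v.map_add_eq_of_lt_right h_lt, hp₀]

theorem stmt_9_general {n : ℕ} (hp : ∀ i, v (algebraMap A B (p.coeff i)) ≤ 1)
    (hp₀ : v (algebraMap A B (p.coeff 0)) = 1) (hxy : y ^ n = x * aeval x p) (hx : v x < 1) :
    v y ^ n = v x ∧ v y < 1 := by
  have h_pow : v y ^ n = v x := by
    rw [← map_pow, hxy, map_mul, valuation_aeval_eq_one_of_coeff_zero hp hp₀ hx, mul_one]
  refine ⟨h_pow, lt_of_not_ge fun h_ge ↦ hx.not_ge ?_⟩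
  exact h_pow ▸ one_le_pow_of_one_le' h_ge n

end

/-- Let `K` be a field, `b c ∈ K` with `c ≠ 0`, `L/K` a field extension,
and let `x, y ∈ L` be nonzero with `y³ = x³ + bx² + cx`.  Let `v` be a valuation on `L`,
with values in a linearly ordered commutative group with zero, trivial on `Kˣ`.
If `v(x) < 1` (i.e. `x` has a zero at the place determined by `v`), then `v(y)³ = v(x)`;
in particular `v(y) < 1` and the multiplicity of `x` at such a place is three times
that of `y`. -/
theorem stmt_9 (K : Type*) [Field K] (b c : K) (hc : c ≠ 0) (L : Type*) [Field L]
    [Algebra K L] (x y : L) (hx : x ≠ 0) (hy : y ≠ 0)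
    (hxy : y ^ 3 = x ^ 3 + algebraMap K L b * x ^ 2 + algebraMap K L c * x)
    (Γ₀ : Type*) [LinearOrderedCommGroupWithZero Γ₀] (v : Valuation L Γ₀)
    (hv : ∀ a : K, a ≠ 0 → v (algebraMap K L a) = 1)
    (hvx : v x < 1) :
    v y ^ 3 = v x ∧ v y < 1 := by
  have : v.IsTrivialOn K := ⟨hv⟩
  refine stmt_9_general (p := X ^ 2 + C b * X + C c)
    (fun _ ↦ Valuation.IsTrivialOn.valuation_algebraMap_le_one v _) ?_ ?_ hvx
  · simpa using hv c hc
  · simp only [hxy, map_add, map_mul, map_pow, aeval_X, aeval_C]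
    ring
end
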